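/- Suppose S satisfies the SGA equation and the SGS conditions on U, and set α^{kl}(x) := 2 ∂²S/∂p_1^k ∂p_2^l (0,0,x). Define, for (p,x) in a sufficiently small open neighborhood of {0}×U in ℝ^d × ℝ^d, the maps s(p,x) := ∇_{p_2}S(p,0,x) and t(p,x) := ∇_{p_1}S(0,p,x). Then s(0,x) = t(0,x) = x for all x ∈ U, and on that neighborhood {s^i, s^j}_ω = α^{ij}∘s, {t^i, t^j}_ω = −α^{ij}∘t, and {s^i, t^j}_ω = 0 for all i, j; that is, (s, t) is a solution of the Lie system of the Poisson structure α on U. -/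

import Mathlib

/-!
The function `S` generates the graph of a local groupoid multiplication on `ℝ^d × ℝ^d`: the product
of `(p₁, ∇_{p₁}S(p₁,p₂,x))` and `(p₂, ∇_{p₂}S(p₁,p₂,x))` is `(∇_x S(p₁,p₂,x), x)`, with source map
`s` and target map `t`. Each side of the additivity equation is the critical value of an action in
the intermediate variables `(x̄, p̄)`, respectively `(x̃, p̃)`, so its derivative only sees the
explicit dependence on `p₁, p₂, p₃, x` (`envelope_bar`, `envelope_til`). Comparing the derivatives
in `p₂` at `p₂ = 0` and in `p₃` at `p₃ = 0`, where the boundary conditions solve the implicit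
equations explicitly, gives (`groupoid_identities`)

* `s(p₁, ∇_{p₁}S(p₁,p₃,x)) = t(p₃, ∇_{p₂}S(p₁,p₃,x))`,
* `s(∇_x S(p₁,p₂,x), x) = s(p₂, ∇_{p₂}S(p₁,p₂,x))`.

The derivative of the first identity in `p₃` at `p₃ = 0` reads
`Σ_u ∂s^i/∂x_u ∂s^l/∂p_u = ½ α^{il}(s) + ∂²S/∂p₂^i∂p₂^l(p,0,x)` (`half_bracket_source`).
Antisymmetrizing kills the last term and yields `{s^i,s^l} = ½ (α^{il} - α^{li})∘s`, and `α` is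
antisymmetric because `S(p,-p,x) = 0` (`hess_antisymm`). The derivative in `p₁` at `p₁ = 0` gives
the bracket of `t` in the same way (`half_bracket_target`), and the derivative of the second
identity in `p₁` at `p₁ = 0` is exactly `{s^i,t^l} = 0` (`bracket_mixed`).
-/

noncomputable section

/-- Standard basis vector `e_u` of `ℝ^d`. -/
def e (d : ℕ) (u : Fin d) : Fin d → ℝ := Pi.single u 1

/-- The SGS conditions for `S` on the open set `Ω ⊆ ℝ^d × ℝ^d × ℝ^d`:
`S(p,0,x) = S(0,p,x) = p·x` and `S(p,−p,x) = 0` whenever defined. -/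
def SGS (d : ℕ) (Ω : Set ((Fin d → ℝ) × (Fin d → ℝ) × (Fin d → ℝ)))
    (S : (Fin d → ℝ) × (Fin d → ℝ) × (Fin d → ℝ) → ℝ) : Prop :=
  (∀ p x : Fin d → ℝ, (p, (0 : Fin d → ℝ), x) ∈ Ω → S (p, 0, x) = ∑ i, p i * x i) ∧
  (∀ p x : Fin d → ℝ, ((0 : Fin d → ℝ), p, x) ∈ Ω → S (0, p, x) = ∑ i, p i * x i) ∧
  (∀ p x : Fin d → ℝ, (p, -p, x) ∈ Ω → S (p, -p, x) = 0)

/-- The SGA equation for `S` on `U`: on an open neighborhood `W` of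
`{0}×{0}×{0}×U` there are smooth maps `x̄, p̄, x̃, p̃` solving the implicit
equations `x̄ = ∇_{p₁}S(p̄,p₃,x)`, `p̄ = ∇_x S(p₁,p₂,x̄)`,
`x̃ = ∇_{p₂}S(p₁,p̃,x)`, `p̃ = ∇_x S(p₂,p₃,x̃)`, and the additivity equation
`S(p₁,p₂,x̄) + S(p̄,p₃,x) − x̄·p̄ = S(p₂,p₃,x̃) + S(p₁,p̃,x) − x̃·p̃` holds. -/
def SGA (d : ℕ) (U : Set (Fin d → ℝ))
    (Ω : Set ((Fin d → ℝ) × (Fin d → ℝ) × (Fin d → ℝ)))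
    (S : (Fin d → ℝ) × (Fin d → ℝ) × (Fin d → ℝ) → ℝ) : Prop :=
  ∃ (W : Set ((Fin d → ℝ) × (Fin d → ℝ) × (Fin d → ℝ) × (Fin d → ℝ)))
    (barx barp tilx tilp :
      (Fin d → ℝ) × (Fin d → ℝ) × (Fin d → ℝ) × (Fin d → ℝ) → (Fin d → ℝ)),
    IsOpen W ∧
    (∀ x ∈ U, ((0 : Fin d → ℝ), (0 : Fin d → ℝ), (0 : Fin d → ℝ), x) ∈ W) ∧
    ContDiffOn ℝ (⊤ : ℕ∞) barx W ∧ ContDiffOn ℝ (⊤ : ℕ∞) barp W ∧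
    ContDiffOn ℝ (⊤ : ℕ∞) tilx W ∧ ContDiffOn ℝ (⊤ : ℕ∞) tilp W ∧
    ∀ p₁ p₂ p₃ x : Fin d → ℝ, (p₁, p₂, p₃, x) ∈ W →
      (barp (p₁, p₂, p₃, x), p₃, x) ∈ Ω ∧
      (p₁, p₂, barx (p₁, p₂, p₃, x)) ∈ Ω ∧
      (p₁, tilp (p₁, p₂, p₃, x), x) ∈ Ω ∧
      (p₂, p₃, tilx (p₁, p₂, p₃, x)) ∈ Ω ∧
      (∀ k, barx (p₁, p₂, p₃, x) k
        = fderiv ℝ S (barp (p₁, p₂, p₃, x), p₃, x) (e d k, 0, 0)) ∧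
      (∀ k, barp (p₁, p₂, p₃, x) k
        = fderiv ℝ S (p₁, p₂, barx (p₁, p₂, p₃, x)) (0, 0, e d k)) ∧
      (∀ k, tilx (p₁, p₂, p₃, x) k
        = fderiv ℝ S (p₁, tilp (p₁, p₂, p₃, x), x) (0, e d k, 0)) ∧
      (∀ k, tilp (p₁, p₂, p₃, x) k
        = fderiv ℝ S (p₂, p₃, tilx (p₁, p₂, p₃, x)) (0, 0, e d k)) ∧
      (S (p₁, p₂, barx (p₁, p₂, p₃, x)) + S (barp (p₁, p₂, p₃, x), p₃, x)
          - ∑ k, barx (p₁, p₂, p₃, x) k * barp (p₁, p₂, p₃, x) k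
        = S (p₂, p₃, tilx (p₁, p₂, p₃, x)) + S (p₁, tilp (p₁, p₂, p₃, x), x)
          - ∑ k, tilx (p₁, p₂, p₃, x) k * tilp (p₁, p₂, p₃, x) k)

/-- `α^{kl}(x) = 2 ∂²S/∂p₁^k ∂p₂^l (0,0,x)`. -/
def alphaS (d : ℕ) (S : (Fin d → ℝ) × (Fin d → ℝ) × (Fin d → ℝ) → ℝ)
    (x : Fin d → ℝ) (k l : Fin d) : ℝ :=
  2 * fderiv ℝ (fun w => fderiv ℝ S w ((0 : Fin d → ℝ), e d l, (0 : Fin d → ℝ)))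
        ((0 : Fin d → ℝ), (0 : Fin d → ℝ), x) (e d k, 0, 0)

/-- Canonical Poisson bracket on `ℝ^d × ℝ^d` (points written `(p, x)`):
`{F,G}_ω = Σ_u (∂F/∂x_u ∂G/∂p_u − ∂F/∂p_u ∂G/∂x_u)`. -/
def pbω (d : ℕ) (F G : (Fin d → ℝ) × (Fin d → ℝ) → ℝ)
    (z : (Fin d → ℝ) × (Fin d → ℝ)) : ℝ :=
  ∑ u : Fin d,
    (fderiv ℝ F z (0, e d u) * fderiv ℝ G z (e d u, 0)
      - fderiv ℝ F z (e d u, 0) * fderiv ℝ G z (0, e d u))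

/-- `s(p,x) = ∇_{p₂}S(p,0,x)`. -/
def sourceS (d : ℕ) (S : (Fin d → ℝ) × (Fin d → ℝ) × (Fin d → ℝ) → ℝ)
    (z : (Fin d → ℝ) × (Fin d → ℝ)) : Fin d → ℝ :=
  fun i => fderiv ℝ S (z.1, (0 : Fin d → ℝ), z.2) (0, e d i, 0)

/-- `t(p,x) = ∇_{p₁}S(0,p,x)`. -/
def targetS (d : ℕ) (S : (Fin d → ℝ) × (Fin d → ℝ) × (Fin d → ℝ) → ℝ)
    (z : (Fin d → ℝ) × (Fin d → ℝ)) : Fin d → ℝ :=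
  fun i => fderiv ℝ S ((0 : Fin d → ℝ), z.1, z.2) (e d i, 0, 0)

/-! ### Linear algebra and first derivatives -/

/-- Expansion of a linear functional on `ℝ^d` in the standard basis. -/
lemma clm_apply_eq_sum {d : ℕ} (L : (Fin d → ℝ) →L[ℝ] ℝ) (b : Fin d → ℝ) :
    L b = ∑ u, b u * L (e d u) := by
  conv_lhs => rw [pi_eq_sum_univ' b]
  rw [map_sum]
  refine Finset.sum_congr rfl fun u _ => ?_
  rw [map_smul, smul_eq_mul, e]

section
variable {d : ℕ} {Ω : Set ((Fin d → ℝ) × (Fin d → ℝ) × (Fin d → ℝ))}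
  {S : (Fin d → ℝ) × (Fin d → ℝ) × (Fin d → ℝ) → ℝ}

lemma clm_fst {L : ((Fin d → ℝ) × (Fin d → ℝ) × (Fin d → ℝ)) →L[ℝ] ℝ} (b : Fin d → ℝ) :
    L (b, 0, 0) = ∑ u, b u * L (e d u, 0, 0) := by
  exact clm_apply_eq_sum (L.comp (ContinuousLinearMap.inl ℝ _ _)) b

lemma clm_snd {L : ((Fin d → ℝ) × (Fin d → ℝ) × (Fin d → ℝ)) →L[ℝ] ℝ} (b : Fin d → ℝ) :
    L (0, b, 0) = ∑ u, b u * L (0, e d u, 0) := by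
  simpa using clm_apply_eq_sum
    (L.comp ((ContinuousLinearMap.inr ℝ _ _).comp (ContinuousLinearMap.inl ℝ _ _))) b

lemma clm_trd {L : ((Fin d → ℝ) × (Fin d → ℝ) × (Fin d → ℝ)) →L[ℝ] ℝ} (b : Fin d → ℝ) :
    L (0, 0, b) = ∑ u, b u * L (0, 0, e d u) := by
  simpa using clm_apply_eq_sum
    (L.comp ((ContinuousLinearMap.inr ℝ _ _).comp (ContinuousLinearMap.inr ℝ _ _))) b

lemma clm_split {L : ((Fin d → ℝ) × (Fin d → ℝ) × (Fin d → ℝ)) →L[ℝ] ℝ} (a b c : Fin d → ℝ) :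
    L (a, b, c) = L (a, 0, 0) + L (0, b, 0) + L (0, 0, c) := by
  rw [← map_add, ← map_add]; simp

lemma sum_mul_e (x : Fin d → ℝ) (k : Fin d) : ∑ i, e d k i * x i = x k := by
  simp [e, Pi.single_apply]

lemma sum_mul_e' (x : Fin d → ℝ) (k : Fin d) : ∑ i, x i * e d k i = x k := by
  simp [e, Pi.single_apply]

lemma hasFDerivAt_S (hΩ : IsOpen Ω) (hS : ContDiffOn ℝ (⊤ : ℕ∞) S Ω) {w} (hw : w ∈ Ω) :
    HasFDerivAt S (fderiv ℝ S w) w :=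
  ((hS.contDiffAt (hΩ.mem_nhds hw)).differentiableAt (by simp)).hasFDerivAt

lemma hasFDerivAt_DS (hΩ : IsOpen Ω) (hS : ContDiffOn ℝ (⊤ : ℕ∞) S Ω) {w} (hw : w ∈ Ω) :
    HasFDerivAt (fderiv ℝ S) (fderiv ℝ (fderiv ℝ S) w) w :=
  (((hS.contDiffAt (hΩ.mem_nhds hw)).fderiv_right (m := 1) (by norm_cast)).differentiableAt
    (by simp)).hasFDerivAt

lemma hess_symm (hΩ : IsOpen Ω) (hS : ContDiffOn ℝ (⊤ : ℕ∞) S Ω) {w} (hw : w ∈ Ω)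
    (a b : (Fin d → ℝ) × (Fin d → ℝ) × (Fin d → ℝ)) :
    fderiv ℝ (fderiv ℝ S) w a b = fderiv ℝ (fderiv ℝ S) w b a :=
  ((hS.contDiffAt (hΩ.mem_nhds hw)).isSymmSndFDerivAt (by simp; norm_cast)) a b

/-- The derivative of a component of `∇S` along a differentiable curve in `Ω`. -/
lemma hasDerivAt_DS_curve (hΩ : IsOpen Ω) (hS : ContDiffOn ℝ (⊤ : ℕ∞) S Ω)
    {c : ℝ → (Fin d → ℝ) × (Fin d → ℝ) × (Fin d → ℝ)} {c'} {τ : ℝ}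
    (hw : c τ ∈ Ω) (hc : HasDerivAt c c' τ) (v) :
    HasDerivAt (fun r => fderiv ℝ S (c r) v) (fderiv ℝ (fderiv ℝ S) (c τ) c' v) τ := by
  have h := (hasFDerivAt_DS hΩ hS hw).comp_hasDerivAt τ hc
  have h2 := h.clm_apply (hasDerivAt_const τ v)
  simpa using h2

lemma hasDerivAt_lin (a b : Fin d → ℝ) : HasDerivAt (fun r : ℝ => a + r • b) b 0 := by
  simpa using ((hasDerivAt_id (0 : ℝ)).smul_const b).const_add a

/-! ### Consequences of the boundary conditions -/

/-- Derivative of the pairing `p · x` along a pair of affine lines. -/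
lemma hasDerivAt_pairing (p x a b : Fin d → ℝ) :
    HasDerivAt (fun r : ℝ => ∑ i, (p + r • a) i * (x + r • b) i)
      ((∑ i, a i * x i) + ∑ i, p i * b i) 0 := by
  rw [← Finset.sum_add_distrib]
  refine HasDerivAt.fun_sum fun i _ => ?_
  have h1 := hasDerivAt_pi.1 (hasDerivAt_lin p a) i
  have h2 := hasDerivAt_pi.1 (hasDerivAt_lin x b) i
  refine (h1.fun_mul h2).congr_deriv ?_
  simp

lemma DS_right_zero (hΩ : IsOpen Ω) (hS : ContDiffOn ℝ (⊤ : ℕ∞) S Ω) (hSGS : SGS d Ω S)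
    {p x : Fin d → ℝ} (hw : (p, (0 : Fin d → ℝ), x) ∈ Ω) (a b : Fin d → ℝ) :
    fderiv ℝ S (p, 0, x) (a, 0, b) = (∑ i, a i * x i) + ∑ i, p i * b i := by
  have hc : HasDerivAt (fun r : ℝ => (p + r • a, (0 : Fin d → ℝ), x + r • b)) (a, 0, b) 0 :=
    (hasDerivAt_lin p a).prodMk ((hasDerivAt_const _ _).prodMk (hasDerivAt_lin x b))
  have hS0 : HasFDerivAt S (fderiv ℝ S (p, 0, x))
      ((fun r : ℝ => (p + r • a, (0 : Fin d → ℝ), x + r • b)) 0) := by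
    simpa using hasFDerivAt_S hΩ hS hw
  refine (hS0.comp_hasDerivAt 0 hc).unique
    ((hasDerivAt_pairing p x a b).congr_of_eventuallyEq ?_)
  filter_upwards [hc.continuousAt.eventually (hΩ.mem_nhds (by simpa using hw))] with r hr
  exact hSGS.1 _ _ hr

lemma DS_left_zero (hΩ : IsOpen Ω) (hS : ContDiffOn ℝ (⊤ : ℕ∞) S Ω) (hSGS : SGS d Ω S)
    {p x : Fin d → ℝ} (hw : ((0 : Fin d → ℝ), p, x) ∈ Ω) (a b : Fin d → ℝ) :
    fderiv ℝ S (0, p, x) (0, a, b) = (∑ i, a i * x i) + ∑ i, p i * b i := by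
  have hc : HasDerivAt (fun r : ℝ => ((0 : Fin d → ℝ), p + r • a, x + r • b)) (0, a, b) 0 :=
    (hasDerivAt_const _ _).prodMk ((hasDerivAt_lin p a).prodMk (hasDerivAt_lin x b))
  have hS0 : HasFDerivAt S (fderiv ℝ S (0, p, x))
      ((fun r : ℝ => ((0 : Fin d → ℝ), p + r • a, x + r • b)) 0) := by
    simpa using hasFDerivAt_S hΩ hS hw
  refine (hS0.comp_hasDerivAt 0 hc).unique
    ((hasDerivAt_pairing p x a b).congr_of_eventuallyEq ?_)
  filter_upwards [hc.continuousAt.eventually (hΩ.mem_nhds (by simpa using hw))] with r hr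
  exact hSGS.2.1 _ _ hr

/-- `∇_{p₁}S(p,0,x) = x`. -/
lemma DS_right_zero_fst (hΩ : IsOpen Ω) (hS : ContDiffOn ℝ (⊤ : ℕ∞) S Ω) (hSGS : SGS d Ω S)
    {p x : Fin d → ℝ} (hw : (p, (0 : Fin d → ℝ), x) ∈ Ω) (k : Fin d) :
    fderiv ℝ S (p, 0, x) (e d k, 0, 0) = x k := by
  simp [DS_right_zero hΩ hS hSGS hw, sum_mul_e]

/-- `∇_x S(p,0,x) = p`. -/
lemma DS_right_zero_trd (hΩ : IsOpen Ω) (hS : ContDiffOn ℝ (⊤ : ℕ∞) S Ω) (hSGS : SGS d Ω S)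
    {p x : Fin d → ℝ} (hw : (p, (0 : Fin d → ℝ), x) ∈ Ω) (k : Fin d) :
    fderiv ℝ S (p, 0, x) (0, 0, e d k) = p k := by
  simp [DS_right_zero hΩ hS hSGS hw, sum_mul_e']

/-- `∇_{p₂}S(0,p,x) = x`. -/
lemma DS_left_zero_snd (hΩ : IsOpen Ω) (hS : ContDiffOn ℝ (⊤ : ℕ∞) S Ω) (hSGS : SGS d Ω S)
    {p x : Fin d → ℝ} (hw : ((0 : Fin d → ℝ), p, x) ∈ Ω) (k : Fin d) :
    fderiv ℝ S (0, p, x) (0, e d k, 0) = x k := by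
  simp [DS_left_zero hΩ hS hSGS hw, sum_mul_e]

/-- `∇_x S(0,p,x) = p`. -/
lemma DS_left_zero_trd (hΩ : IsOpen Ω) (hS : ContDiffOn ℝ (⊤ : ℕ∞) S Ω) (hSGS : SGS d Ω S)
    {p x : Fin d → ℝ} (hw : ((0 : Fin d → ℝ), p, x) ∈ Ω) (k : Fin d) :
    fderiv ℝ S (0, p, x) (0, 0, e d k) = p k := by
  simp [DS_left_zero hΩ hS hSGS hw, sum_mul_e']

/-- Differentiating `∇_{p₁}S(p,0,x) = x`. -/
lemma hess_right_zero_fst (hΩ : IsOpen Ω) (hS : ContDiffOn ℝ (⊤ : ℕ∞) S Ω) (hSGS : SGS d Ω S)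
    {p x : Fin d → ℝ} (hw : (p, (0 : Fin d → ℝ), x) ∈ Ω) (a b : Fin d → ℝ) (k : Fin d) :
    fderiv ℝ (fderiv ℝ S) (p, 0, x) (a, 0, b) (e d k, 0, 0) = b k := by
  have hc : HasDerivAt (fun r : ℝ => (p + r • a, (0 : Fin d → ℝ), x + r • b)) (a, 0, b) 0 :=
    (hasDerivAt_lin p a).prodMk ((hasDerivAt_const _ _).prodMk (hasDerivAt_lin x b))
  have h := hasDerivAt_DS_curve hΩ hS (by simpa using hw) hc (e d k, 0, 0)
  simp only [zero_smul, add_zero] at h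
  refine h.unique ((hasDerivAt_pi.1 (hasDerivAt_lin x b) k).congr_of_eventuallyEq ?_)
  filter_upwards [hc.continuousAt.eventually (hΩ.mem_nhds (by simpa using hw))] with r hr
  exact DS_right_zero_fst hΩ hS hSGS hr k

/-- Differentiating `∇_{p₂}S(0,p,x) = x`. -/
lemma hess_left_zero_snd (hΩ : IsOpen Ω) (hS : ContDiffOn ℝ (⊤ : ℕ∞) S Ω) (hSGS : SGS d Ω S)
    {p x : Fin d → ℝ} (hw : ((0 : Fin d → ℝ), p, x) ∈ Ω) (a b : Fin d → ℝ) (k : Fin d) :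
    fderiv ℝ (fderiv ℝ S) (0, p, x) (0, a, b) (0, e d k, 0) = b k := by
  have hc : HasDerivAt (fun r : ℝ => ((0 : Fin d → ℝ), p + r • a, x + r • b)) (0, a, b) 0 :=
    (hasDerivAt_const _ _).prodMk ((hasDerivAt_lin p a).prodMk (hasDerivAt_lin x b))
  have h := hasDerivAt_DS_curve hΩ hS (by simpa using hw) hc (0, e d k, 0)
  simp only [zero_smul, add_zero] at h
  refine h.unique ((hasDerivAt_pi.1 (hasDerivAt_lin x b) k).congr_of_eventuallyEq ?_)
  filter_upwards [hc.continuousAt.eventually (hΩ.mem_nhds (by simpa using hw))] with r hr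
  exact DS_left_zero_snd hΩ hS hSGS hr k

/-- Differentiating `S(p,-p,x) = 0` twice along the line `p = τ v` at `τ = 0`. -/
lemma hess_diag (hΩ : IsOpen Ω) (hS : ContDiffOn ℝ (⊤ : ℕ∞) S Ω) (hSGS : SGS d Ω S)
    {x : Fin d → ℝ} (hw : ((0 : Fin d → ℝ), (0 : Fin d → ℝ), x) ∈ Ω) (v : Fin d → ℝ) :
    fderiv ℝ (fderiv ℝ S) (0, 0, x) (v, -v, 0) (v, -v, 0) = 0 := by
  have hc : ∀ τ : ℝ, HasDerivAt (fun r : ℝ => (r • v, -(r • v), x)) (v, -v, 0) τ := fun τ => by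
    have h1 : HasDerivAt (fun r : ℝ => r • v) v τ := by
      simpa using (hasDerivAt_id τ).smul_const v
    exact h1.prodMk (h1.neg.prodMk (hasDerivAt_const _ _))
  have hw0 : (fun r : ℝ => (r • v, -(r • v), x)) 0 ∈ Ω := by simpa using hw
  have hev := (hc 0).continuousAt.eventually (hΩ.mem_nhds hw0)
  have h := hasDerivAt_DS_curve hΩ hS hw0 (hc 0) (v, -v, 0)
  simp only [zero_smul, neg_zero] at h
  refine h.unique ((hasDerivAt_const (0 : ℝ) (0 : ℝ)).congr_of_eventuallyEq ?_)
  filter_upwards [hev.eventually_nhds] with r hr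
  refine ((hasFDerivAt_S hΩ hS hr.self_of_nhds).comp_hasDerivAt r (hc r)).unique
    ((hasDerivAt_const r (0 : ℝ)).congr_of_eventuallyEq ?_)
  filter_upwards [hr] with q hq
  exact hSGS.2.2 _ _ hq

/-- Antisymmetry of the mixed Hessian block of `S` at `p₁ = p₂ = 0`: polarize `hess_diag`. -/
lemma hess_antisymm (hΩ : IsOpen Ω) (hS : ContDiffOn ℝ (⊤ : ℕ∞) S Ω) (hSGS : SGS d Ω S)
    {x : Fin d → ℝ} (hw : ((0 : Fin d → ℝ), (0 : Fin d → ℝ), x) ∈ Ω) (k l : Fin d) :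
    fderiv ℝ (fderiv ℝ S) (0, 0, x) (e d k, 0, 0) (0, e d l, 0)
      = - fderiv ℝ (fderiv ℝ S) (0, 0, x) (e d l, 0, 0) (0, e d k, 0) := by
  set H := fderiv ℝ (fderiv ℝ S) (0, 0, x) with hH
  have key : ∀ v : Fin d → ℝ, H (v, -v, 0) (v, -v, 0) = 0 := hess_diag hΩ hS hSGS hw
  have h11 : ∀ i j, H (e d i, 0, 0) (e d j, 0, 0) = 0 := fun i j => by
    simpa using hess_right_zero_fst hΩ hS hSGS hw (e d i) 0 j
  have h22 : ∀ i j, H (0, e d i, 0) (0, e d j, 0) = 0 := fun i j => by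
    simpa using hess_left_zero_snd hΩ hS hSGS hw (e d i) 0 j
  have hs : ∀ i j, H (0, e d i, 0) (e d j, 0, 0) = H (e d j, 0, 0) (0, e d i, 0) := fun i j =>
    hess_symm hΩ hS hw _ _
  have hsplit : ∀ v : Fin d → ℝ, (v, -v, (0 : Fin d → ℝ)) = (v, 0, 0) - (0, v, 0) := by simp
  have hk := key (e d k)
  have hl := key (e d l)
  have hkl := key (e d k + e d l)
  have e1 : (e d k + e d l, -(e d k + e d l), (0 : Fin d → ℝ))
      = (e d k, 0, 0) + (e d l, 0, 0) - (0, e d k, 0) - (0, e d l, 0) := by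
    ext <;> simp [sub_eq_add_neg, add_comm]
  rw [hsplit] at hk hl
  rw [e1] at hkl
  simp only [map_add, map_sub, add_apply, sub_apply,
    h11, h22, hs] at hk hl hkl
  linarith

/-! ### Derivatives of the source and target maps -/

lemma fderiv_sourceS (hΩ : IsOpen Ω) (hS : ContDiffOn ℝ (⊤ : ℕ∞) S Ω)
    {p x : Fin d → ℝ} (hw : (p, (0 : Fin d → ℝ), x) ∈ Ω) (i : Fin d) :
    HasFDerivAt (fun w => sourceS d S w i) (fderiv ℝ (fun w => sourceS d S w i) (p, x)) (p, x) ∧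
    ∀ a b, fderiv ℝ (fun w => sourceS d S w i) (p, x) (a, b)
      = fderiv ℝ (fderiv ℝ S) (p, 0, x) (a, 0, b) (0, e d i, 0) := by
  have hι : HasFDerivAt (fun z : (Fin d → ℝ) × (Fin d → ℝ) => (z.1, (0 : Fin d → ℝ), z.2))
      ((ContinuousLinearMap.fst ℝ (Fin d → ℝ) (Fin d → ℝ)).prod
        ((0 : _ →L[ℝ] (Fin d → ℝ)).prod (ContinuousLinearMap.snd ℝ _ _))) (p, x) :=
    hasFDerivAt_fst.prodMk ((hasFDerivAt_const _ _).prodMk hasFDerivAt_snd)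
  have h := (HasFDerivAt.comp (p, x) (hasFDerivAt_DS hΩ hS hw) hι).clm_apply
    (hasFDerivAt_const ((0 : Fin d → ℝ), e d i, (0 : Fin d → ℝ)) (p, x))
  have h' : HasFDerivAt (fun w => sourceS d S w i) _ (p, x) := h
  refine ⟨h'.differentiableAt.hasFDerivAt, fun a b => ?_⟩
  rw [h'.fderiv]
  simp

lemma fderiv_targetS (hΩ : IsOpen Ω) (hS : ContDiffOn ℝ (⊤ : ℕ∞) S Ω)
    {p x : Fin d → ℝ} (hw : ((0 : Fin d → ℝ), p, x) ∈ Ω) (i : Fin d) :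
    HasFDerivAt (fun w => targetS d S w i) (fderiv ℝ (fun w => targetS d S w i) (p, x)) (p, x) ∧
    ∀ a b, fderiv ℝ (fun w => targetS d S w i) (p, x) (a, b)
      = fderiv ℝ (fderiv ℝ S) (0, p, x) (0, a, b) (e d i, 0, 0) := by
  have hι : HasFDerivAt (fun z : (Fin d → ℝ) × (Fin d → ℝ) => ((0 : Fin d → ℝ), z.1, z.2))
      ((0 : _ →L[ℝ] (Fin d → ℝ)).prod ((ContinuousLinearMap.fst ℝ (Fin d → ℝ) (Fin d → ℝ)).prod
        (ContinuousLinearMap.snd ℝ _ _))) (p, x) :=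
    (hasFDerivAt_const _ _).prodMk (hasFDerivAt_fst.prodMk hasFDerivAt_snd)
  have h := (HasFDerivAt.comp (p, x) (hasFDerivAt_DS hΩ hS hw) hι).clm_apply
    (hasFDerivAt_const (e d i, (0 : Fin d → ℝ), (0 : Fin d → ℝ)) (p, x))
  have h' : HasFDerivAt (fun w => targetS d S w i) _ (p, x) := h
  refine ⟨h'.differentiableAt.hasFDerivAt, fun a b => ?_⟩
  rw [h'.fderiv]
  simp

lemma alphaS_eq (hΩ : IsOpen Ω) (hS : ContDiffOn ℝ (⊤ : ℕ∞) S Ω)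
    {x : Fin d → ℝ} (hw : ((0 : Fin d → ℝ), (0 : Fin d → ℝ), x) ∈ Ω) (k l : Fin d) :
    alphaS d S x k l
      = 2 * fderiv ℝ (fderiv ℝ S) (0, 0, x) (e d k, 0, 0) (0, e d l, 0) := by
  have h := (hasFDerivAt_DS hΩ hS hw).clm_apply
    (hasFDerivAt_const ((0 : Fin d → ℝ), e d l, (0 : Fin d → ℝ))
      ((0 : Fin d → ℝ), (0 : Fin d → ℝ), x))
  rw [alphaS, h.fderiv]
  simp

/-! ### Differentiating the additivity equation -/

/-- Envelope theorem for the left side of the additivity equation: at a critical pair `(X, P)`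
the variations of `X` and `P` do not contribute to the derivative. -/
lemma envelope_bar (hΩ : IsOpen Ω) (hS : ContDiffOn ℝ (⊤ : ℕ∞) S Ω)
    {q₁ q₂ q₃ y X P : ℝ → Fin d → ℝ} {q₁' q₂' q₃' y' X' P' : Fin d → ℝ} {τ : ℝ}
    (h₁ : HasDerivAt q₁ q₁' τ) (h₂ : HasDerivAt q₂ q₂' τ) (h₃ : HasDerivAt q₃ q₃' τ)
    (hy : HasDerivAt y y' τ) (hX : HasDerivAt X X' τ) (hP : HasDerivAt P P' τ)
    (hw₁ : (q₁ τ, q₂ τ, X τ) ∈ Ω) (hw₂ : (P τ, q₃ τ, y τ) ∈ Ω)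
    (eX : ∀ k, X τ k = fderiv ℝ S (P τ, q₃ τ, y τ) (e d k, 0, 0))
    (eP : ∀ k, P τ k = fderiv ℝ S (q₁ τ, q₂ τ, X τ) (0, 0, e d k)) :
    HasDerivAt (fun r => S (q₁ r, q₂ r, X r) + S (P r, q₃ r, y r) - ∑ k, X r k * P r k)
      (fderiv ℝ S (q₁ τ, q₂ τ, X τ) (q₁', q₂', 0) + fderiv ℝ S (P τ, q₃ τ, y τ) (0, q₃', y')) τ := by
  have d1 := (hasFDerivAt_S hΩ hS hw₁).comp_hasDerivAt τ (h₁.prodMk (h₂.prodMk hX))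
  have d2 := (hasFDerivAt_S hΩ hS hw₂).comp_hasDerivAt τ (hP.prodMk (h₃.prodMk hy))
  have d3 : HasDerivAt (fun r => ∑ k, X r k * P r k) (∑ k, (X' k * P τ k + X τ k * P' k)) τ :=
    HasDerivAt.fun_sum fun k _ => (hasDerivAt_pi.1 hX k).mul (hasDerivAt_pi.1 hP k)
  refine ((d1.add d2).sub d3).congr_deriv ?_
  have s1 := clm_trd (L := fderiv ℝ S (q₁ τ, q₂ τ, X τ)) X'
  have s2 := clm_fst (L := fderiv ℝ S (P τ, q₃ τ, y τ)) P'
  simp only [← eP] at s1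
  simp only [← eX] at s2
  rw [clm_split q₁' q₂' X', clm_split P' q₃' y', clm_split q₁' q₂' 0, clm_split 0 q₃' y', s1, s2,
    Finset.sum_add_distrib, Finset.sum_congr rfl fun k _ => mul_comm (X τ k) (P' k)]
  simp only [Prod.mk_zero_zero, map_zero]
  ring

/-- Envelope theorem for the right side of the additivity equation. -/
lemma envelope_til (hΩ : IsOpen Ω) (hS : ContDiffOn ℝ (⊤ : ℕ∞) S Ω)
    {q₁ q₂ q₃ y X P : ℝ → Fin d → ℝ} {q₁' q₂' q₃' y' X' P' : Fin d → ℝ} {τ : ℝ}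
    (h₁ : HasDerivAt q₁ q₁' τ) (h₂ : HasDerivAt q₂ q₂' τ) (h₃ : HasDerivAt q₃ q₃' τ)
    (hy : HasDerivAt y y' τ) (hX : HasDerivAt X X' τ) (hP : HasDerivAt P P' τ)
    (hw₁ : (q₂ τ, q₃ τ, X τ) ∈ Ω) (hw₂ : (q₁ τ, P τ, y τ) ∈ Ω)
    (eX : ∀ k, X τ k = fderiv ℝ S (q₁ τ, P τ, y τ) (0, e d k, 0))
    (eP : ∀ k, P τ k = fderiv ℝ S (q₂ τ, q₃ τ, X τ) (0, 0, e d k)) :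
    HasDerivAt (fun r => S (q₂ r, q₃ r, X r) + S (q₁ r, P r, y r) - ∑ k, X r k * P r k)
      (fderiv ℝ S (q₂ τ, q₃ τ, X τ) (q₂', q₃', 0) + fderiv ℝ S (q₁ τ, P τ, y τ) (q₁', 0, y')) τ := by
  have d1 := (hasFDerivAt_S hΩ hS hw₁).comp_hasDerivAt τ (h₂.prodMk (h₃.prodMk hX))
  have d2 := (hasFDerivAt_S hΩ hS hw₂).comp_hasDerivAt τ (h₁.prodMk (hP.prodMk hy))
  have d3 : HasDerivAt (fun r => ∑ k, X r k * P r k) (∑ k, (X' k * P τ k + X τ k * P' k)) τ :=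
    HasDerivAt.fun_sum fun k _ => (hasDerivAt_pi.1 hX k).mul (hasDerivAt_pi.1 hP k)
  refine ((d1.add d2).sub d3).congr_deriv ?_
  have s1 := clm_trd (L := fderiv ℝ S (q₂ τ, q₃ τ, X τ)) X'
  have s2 := clm_snd (L := fderiv ℝ S (q₁ τ, P τ, y τ)) P'
  simp only [← eP] at s1
  simp only [← eX] at s2
  rw [clm_split q₂' q₃' X', clm_split q₁' P' y', clm_split q₂' q₃' 0, clm_split q₁' 0 y', s1, s2,
    Finset.sum_add_distrib, Finset.sum_congr rfl fun k _ => mul_comm (X τ k) (P' k)]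
  simp only [Prod.mk_zero_zero, map_zero]
  ring

/-- The groupoid identities contained in the SGA equation, on an open set `W`, with all the
domain memberships they presuppose. The clause for `(p₁, 0, p₃, x)` says that the source of the
first factor of a composable pair is the target of the second one; the clause for
`(p₁, p₂, 0, x)` says that a product has the source of its second factor. -/
lemma groupoid_identities (hΩ : IsOpen Ω) (hS : ContDiffOn ℝ (⊤ : ℕ∞) S Ω) (hSGS : SGS d Ω S)
    {U : Set (Fin d → ℝ)} (hSGA : SGA d U Ω S) :
    ∃ W : Set ((Fin d → ℝ) × (Fin d → ℝ) × (Fin d → ℝ) × (Fin d → ℝ)), IsOpen W ∧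
      (∀ x ∈ U, ((0 : Fin d → ℝ), (0 : Fin d → ℝ), (0 : Fin d → ℝ), x) ∈ W) ∧
      (∀ p₁ p₃ x, (p₁, 0, p₃, x) ∈ W → (p₁, p₃, x) ∈ Ω ∧
        (p₁, 0, fun k => fderiv ℝ S (p₁, p₃, x) (e d k, 0, 0)) ∈ Ω ∧
        (0, p₃, fun k => fderiv ℝ S (p₁, p₃, x) (0, e d k, 0)) ∈ Ω ∧
        sourceS d S (p₁, fun k => fderiv ℝ S (p₁, p₃, x) (e d k, 0, 0))
          = targetS d S (p₃, fun k => fderiv ℝ S (p₁, p₃, x) (0, e d k, 0))) ∧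
      (∀ p₁ p₂ x, (p₁, p₂, 0, x) ∈ W → (p₁, p₂, x) ∈ Ω ∧
        ((fun k => fderiv ℝ S (p₁, p₂, x) (0, 0, e d k)), 0, x) ∈ Ω ∧
        (p₂, 0, fun k => fderiv ℝ S (p₁, p₂, x) (0, e d k, 0)) ∈ Ω ∧
        sourceS d S (fun k => fderiv ℝ S (p₁, p₂, x) (0, 0, e d k), x)
          = sourceS d S (p₂, fun k => fderiv ℝ S (p₁, p₂, x) (0, e d k, 0))) := by
  obtain ⟨W, bx, bp, tx, tp, hW, hUW, hbx, hbp, htx, htp, H⟩ := hSGA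
  -- equality of the differentials of the two sides, in the directions `p₂` and `p₃`
  have grad : ∀ p₁ p₂ p₃ x, (p₁, p₂, p₃, x) ∈ W → ∀ v₂ v₃ : Fin d → ℝ,
      fderiv ℝ S (p₁, p₂, bx (p₁, p₂, p₃, x)) (0, v₂, 0)
        + fderiv ℝ S (bp (p₁, p₂, p₃, x), p₃, x) (0, v₃, 0)
      = fderiv ℝ S (p₂, p₃, tx (p₁, p₂, p₃, x)) (v₂, v₃, 0) := by
    intro p₁ p₂ p₃ x hw v₂ v₃
    have hc : HasDerivAt (fun r : ℝ => (p₁, p₂ + r • v₂, p₃ + r • v₃, x)) (0, v₂, v₃, 0) 0 :=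
      (hasDerivAt_const _ _).prodMk ((hasDerivAt_lin p₂ v₂).prodMk
        ((hasDerivAt_lin p₃ v₃).prodMk (hasDerivAt_const _ _)))
    have hw0 : (fun r : ℝ => (p₁, p₂ + r • v₂, p₃ + r • v₃, x)) 0 ∈ W := by simpa using hw
    have dc : ∀ {f : (Fin d → ℝ) × (Fin d → ℝ) × (Fin d → ℝ) × (Fin d → ℝ) → (Fin d → ℝ)},
        ContDiffOn ℝ (⊤ : ℕ∞) f W →
        ∃ f', HasDerivAt (fun r : ℝ => f (p₁, p₂ + r • v₂, p₃ + r • v₃, x)) f' 0 := fun hf =>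
      ⟨_, (((hf.contDiffAt (hW.mem_nhds hw0)).differentiableAt
        (by simp)).hasFDerivAt).comp_hasDerivAt 0 hc⟩
    obtain ⟨bx', dbx⟩ := dc hbx
    obtain ⟨bp', dbp⟩ := dc hbp
    obtain ⟨tx', dtx⟩ := dc htx
    obtain ⟨tp', dtp⟩ := dc htp
    obtain ⟨m1, m2, m3, m4, e1, e2, e3, e4, -⟩ := H _ _ _ _ hw0
    have L := envelope_bar hΩ hS (hasDerivAt_const 0 p₁) (hasDerivAt_lin p₂ v₂)
      (hasDerivAt_lin p₃ v₃) (hasDerivAt_const 0 x) dbx dbp m2 m1 e1 e2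
    have R := envelope_til hΩ hS (hasDerivAt_const 0 p₁) (hasDerivAt_lin p₂ v₂)
      (hasDerivAt_lin p₃ v₃) (hasDerivAt_const 0 x) dtx dtp m4 m3 e3 e4
    have := L.unique (R.congr_of_eventuallyEq (by
      filter_upwards [hc.continuousAt.eventually (hW.mem_nhds hw0)] with r hr
      exact (H _ _ _ _ hr).2.2.2.2.2.2.2.2))
    simpa only [Prod.mk_zero_zero, map_zero, add_zero, zero_smul] using this
  refine ⟨W, hW, hUW, fun p₁ p₃ x hw => ?_, fun p₁ p₂ x hw => ?_⟩
  · obtain ⟨m1, m2, m3, m4, e1, e2, e3, e4, -⟩ := H _ _ _ _ hw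
    have g := fun v => grad _ _ _ _ hw v 0
    have hbp : bp (p₁, 0, p₃, x) = p₁ := by
      ext k; rw [e2, DS_right_zero_trd hΩ hS hSGS m2]
    have htp : tp (p₁, 0, p₃, x) = p₃ := by
      ext k; rw [e4, DS_left_zero_trd hΩ hS hSGS m4]
    rw [hbp] at m1 e1
    rw [htp] at e3
    have hbx := funext e1
    have htx := funext e3
    rw [hbx] at m2 g
    rw [htx] at m4 g
    refine ⟨m1, m2, m4, ?_⟩
    ext i
    have gi := g (e d i)
    simp only [Prod.mk_zero_zero, map_zero, add_zero, zero_add] at gi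
    exact gi
  · obtain ⟨m1, m2, m3, m4, e1, e2, e3, e4, -⟩ := H _ _ _ _ hw
    have g := fun v => grad _ _ _ _ hw 0 v
    have hbx : bx (p₁, p₂, 0, x) = x := by
      ext k; rw [e1, DS_right_zero_fst hΩ hS hSGS m1]
    have htp : tp (p₁, p₂, 0, x) = p₂ := by
      ext k; rw [e4, DS_right_zero_trd hΩ hS hSGS m4]
    rw [hbx] at m2 e2
    rw [htp] at e3
    have hbp := funext e2
    have htx := funext e3
    rw [hbp] at m1 g
    rw [htx] at m4 g
    refine ⟨m2, m1, m4, ?_⟩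
    ext i
    have gi := g (e d i)
    simp only [Prod.mk_zero_zero, map_zero, add_zero, zero_add] at gi
    exact gi

/-! ### The brackets -/

/-- The derivative at `τ = 0` of the curve of gradient components
`τ ↦ (∂S(c τ)(ε k))_k`. -/
lemma hasDerivAt_grad (hΩ : IsOpen Ω) (hS : ContDiffOn ℝ (⊤ : ℕ∞) S Ω)
    {c : ℝ → (Fin d → ℝ) × (Fin d → ℝ) × (Fin d → ℝ)} {c'} {τ : ℝ}
    (hw : c τ ∈ Ω) (hc : HasDerivAt c c' τ)
    (ε : Fin d → (Fin d → ℝ) × (Fin d → ℝ) × (Fin d → ℝ)) :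
    HasDerivAt (fun r k => fderiv ℝ S (c r) (ε k))
      (fun k => fderiv ℝ (fderiv ℝ S) (c τ) c' (ε k)) τ :=
  hasDerivAt_pi.2 fun k => hasDerivAt_DS_curve hΩ hS hw hc (ε k)

/-- Chain rule for a function on `ℝ^d × ℝ^d` along a curve in the product, at a point given up to
equality. -/
lemma chain {F : (Fin d → ℝ) × (Fin d → ℝ) → ℝ} {p x : Fin d → ℝ}
    (hF : HasFDerivAt F (fderiv ℝ F (p, x)) (p, x)) {P X : ℝ → Fin d → ℝ} {P' X' : Fin d → ℝ}
    {τ : ℝ} (hP : HasDerivAt P P' τ) (hX : HasDerivAt X X' τ) (eP : P τ = p) (eX : X τ = x) :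
    HasDerivAt (fun r => F (P r, X r))
      ((∑ u, P' u * fderiv ℝ F (p, x) (e d u, 0)) + ∑ u, X' u * fderiv ℝ F (p, x) (0, e d u)) τ := by
  subst eP eX
  refine (hF.comp_hasDerivAt τ (hP.prodMk hX)).congr_deriv ?_
  have h1 := clm_apply_eq_sum ((fderiv ℝ F (P τ, X τ)).comp (ContinuousLinearMap.inl ℝ _ _)) P'
  have h2 := clm_apply_eq_sum ((fderiv ℝ F (P τ, X τ)).comp (ContinuousLinearMap.inr ℝ _ _)) X'
  simp only [ContinuousLinearMap.comp_apply, ContinuousLinearMap.inl_apply,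
    ContinuousLinearMap.inr_apply] at h1 h2
  rw [← h1, ← h2, ← map_add]
  simp

/-- The derivative in `p₃` at `p₃ = 0` of `s(p₁, ∇_{p₁}S(p₁,p₃,x)) = t(p₃, ∇_{p₂}S(p₁,p₃,x))`.
The last summand is symmetric in `i, l`. -/
lemma half_bracket_source (hΩ : IsOpen Ω) (hS : ContDiffOn ℝ (⊤ : ℕ∞) S Ω) (hSGS : SGS d Ω S)
    {p x : Fin d → ℝ} (hw : (p, (0 : Fin d → ℝ), x) ∈ Ω)
    (hw' : ((0 : Fin d → ℝ), (0 : Fin d → ℝ), sourceS d S (p, x)) ∈ Ω) (i l : Fin d)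
    (hid : ∀ᶠ r : ℝ in nhds 0,
      sourceS d S (p, fun k => fderiv ℝ S (p, 0 + r • e d l, x) (e d k, 0, 0))
        = targetS d S (0 + r • e d l, fun k => fderiv ℝ S (p, 0 + r • e d l, x) (0, e d k, 0))) :
    ∑ u, fderiv ℝ (fun w => sourceS d S w i) (p, x) (0, e d u)
        * fderiv ℝ (fun w => sourceS d S w l) (p, x) (e d u, 0)
      = fderiv ℝ (fderiv ℝ S) (0, 0, sourceS d S (p, x)) (e d i, 0, 0) (0, e d l, 0)
        + fderiv ℝ (fderiv ℝ S) (p, 0, x) (0, e d l, 0) (0, e d i, 0) := by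
  have hc : HasDerivAt (fun r : ℝ => (p, 0 + r • e d l, x)) (0, e d l, 0) 0 :=
    (hasDerivAt_const _ _).prodMk ((hasDerivAt_lin 0 _).prodMk (hasDerivAt_const _ _))
  have hw0 : (fun r : ℝ => (p, 0 + r • e d l, x)) 0 ∈ Ω := by simpa using hw
  have dX := hasDerivAt_grad hΩ hS hw0 hc (fun k => (e d k, 0, 0))
  have dY := hasDerivAt_grad hΩ hS hw0 hc (fun k => (0, e d k, 0))
  have A := chain (fderiv_sourceS hΩ hS hw i).1 (hasDerivAt_const 0 p) dX rfl
    (by ext k; simpa using DS_right_zero_fst hΩ hS hSGS hw k)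
  have B := chain (fderiv_targetS hΩ hS hw' i).1 (hasDerivAt_lin 0 (e d l)) dY (by simp)
    (by ext k; simp [sourceS])
  have key := A.unique (B.congr_of_eventuallyEq (hid.mono fun r hr => congrFun hr i))
  simp only [zero_smul, add_zero, (fderiv_targetS hΩ hS hw' i).2,
    (fderiv_sourceS hΩ hS hw _).2, hess_right_zero_fst hΩ hS hSGS hw',
    sum_mul_e, Pi.zero_apply, zero_mul, Finset.sum_const_zero, zero_add] at key ⊢
  have hi : ∀ u, e d u i = e d i u := fun u => by simp [e, Pi.single_apply, eq_comm]
  simp only [hi, sum_mul_e'] at key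
  rw [hess_symm hΩ hS hw' (e d i, 0, 0), ← key]
  refine Finset.sum_congr rfl fun u _ => ?_
  rw [hess_symm hΩ hS hw (0, e d l, 0) (e d u, 0, 0), mul_comm]

/-- The derivative in `p₁` at `p₁ = 0` of `s(p₁, ∇_{p₁}S(p₁,p₃,x)) = t(p₃, ∇_{p₂}S(p₁,p₃,x))`.
The last summand is symmetric in `i, l`. -/
lemma half_bracket_target (hΩ : IsOpen Ω) (hS : ContDiffOn ℝ (⊤ : ℕ∞) S Ω) (hSGS : SGS d Ω S)
    {p x : Fin d → ℝ} (hw : ((0 : Fin d → ℝ), p, x) ∈ Ω)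
    (hw' : ((0 : Fin d → ℝ), (0 : Fin d → ℝ), targetS d S (p, x)) ∈ Ω) (i l : Fin d)
    (hid : ∀ᶠ r : ℝ in nhds 0,
      sourceS d S (0 + r • e d l, fun k => fderiv ℝ S (0 + r • e d l, p, x) (e d k, 0, 0))
        = targetS d S (p, fun k => fderiv ℝ S (0 + r • e d l, p, x) (0, e d k, 0))) :
    ∑ u, fderiv ℝ (fun w => targetS d S w i) (p, x) (0, e d u)
        * fderiv ℝ (fun w => targetS d S w l) (p, x) (e d u, 0)
      = fderiv ℝ (fderiv ℝ S) (0, 0, targetS d S (p, x)) (e d l, 0, 0) (0, e d i, 0)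
        + fderiv ℝ (fderiv ℝ S) (0, p, x) (e d l, 0, 0) (e d i, 0, 0) := by
  have hc : HasDerivAt (fun r : ℝ => (0 + r • e d l, p, x)) (e d l, 0, 0) 0 :=
    (hasDerivAt_lin 0 _).prodMk ((hasDerivAt_const _ _).prodMk (hasDerivAt_const _ _))
  have hw0 : (fun r : ℝ => (0 + r • e d l, p, x)) 0 ∈ Ω := by simpa using hw
  have dX := hasDerivAt_grad hΩ hS hw0 hc (fun k => (e d k, 0, 0))
  have dY := hasDerivAt_grad hΩ hS hw0 hc (fun k => (0, e d k, 0))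
  have A := chain (fderiv_sourceS hΩ hS hw' i).1 (hasDerivAt_lin 0 (e d l)) dX (by simp)
    (by ext k; simp [targetS])
  have B := chain (fderiv_targetS hΩ hS hw i).1 (hasDerivAt_const 0 p) dY rfl
    (by ext k; simpa using DS_left_zero_snd hΩ hS hSGS hw k)
  have key := B.unique (A.congr_of_eventuallyEq (hid.mono fun r hr => (congrFun hr i).symm))
  simp only [zero_smul, add_zero, (fderiv_targetS hΩ hS hw _).2,
    (fderiv_sourceS hΩ hS hw' _).2, hess_left_zero_snd hΩ hS hSGS hw',
    sum_mul_e, Pi.zero_apply, zero_mul, Finset.sum_const_zero, zero_add] at key ⊢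
  have hi : ∀ u, e d u i = e d i u := fun u => by simp [e, Pi.single_apply, eq_comm]
  simp only [hi, sum_mul_e'] at key
  rw [← key]
  refine Finset.sum_congr rfl fun u _ => ?_
  rw [hess_symm hΩ hS hw (e d l, 0, 0) (0, e d u, 0), mul_comm]

/-- The derivative in `p₁` at `p₁ = 0` of
`s(∇_x S(p₁,p₂,x), x) = s(p₂, ∇_{p₂}S(p₁,p₂,x))` is the commutation of `s` and `t`. -/
lemma bracket_mixed (hΩ : IsOpen Ω) (hS : ContDiffOn ℝ (⊤ : ℕ∞) S Ω) (hSGS : SGS d Ω S)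
    {p x : Fin d → ℝ} (hw : ((0 : Fin d → ℝ), p, x) ∈ Ω)
    (hw' : (p, (0 : Fin d → ℝ), x) ∈ Ω) (i l : Fin d)
    (hid : ∀ᶠ r : ℝ in nhds 0,
      sourceS d S (fun k => fderiv ℝ S (0 + r • e d l, p, x) (0, 0, e d k), x)
        = sourceS d S (p, fun k => fderiv ℝ S (0 + r • e d l, p, x) (0, e d k, 0))) :
    pbω d (fun w => sourceS d S w i) (fun w => targetS d S w l) (p, x) = 0 := by
  have hc : HasDerivAt (fun r : ℝ => (0 + r • e d l, p, x)) (e d l, 0, 0) 0 :=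
    (hasDerivAt_lin 0 _).prodMk ((hasDerivAt_const _ _).prodMk (hasDerivAt_const _ _))
  have hw0 : (fun r : ℝ => (0 + r • e d l, p, x)) 0 ∈ Ω := by simpa using hw
  have dX := hasDerivAt_grad hΩ hS hw0 hc (fun k => (0, 0, e d k))
  have dY := hasDerivAt_grad hΩ hS hw0 hc (fun k => (0, e d k, 0))
  have A := chain (fderiv_sourceS hΩ hS hw' i).1 dX (hasDerivAt_const 0 x)
    (by ext k; simpa using DS_left_zero_trd hΩ hS hSGS hw k) rfl
  have B := chain (fderiv_sourceS hΩ hS hw' i).1 (hasDerivAt_const 0 p) dY rfl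
    (by ext k; simpa using DS_left_zero_snd hΩ hS hSGS hw k)
  have key := A.unique (B.congr_of_eventuallyEq (hid.mono fun r hr => congrFun hr i))
  simp only [zero_smul, add_zero, Pi.zero_apply, zero_mul, Finset.sum_const_zero,
    zero_add] at key
  rw [pbω, Finset.sum_sub_distrib, sub_eq_zero]
  simp only [(fderiv_targetS hΩ hS hw l).2]
  simp only [hess_symm hΩ hS hw _ (e d l, 0, 0)]
  simp only [mul_comm (fderiv ℝ (fun w => sourceS d S w i) (p, x) _)]
  exact key.symm

end

/-- If `S` satisfies the SGA equation and the SGS conditions on `U`, then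
`s(p,x) = ∇_{p₂}S(p,0,x)` and `t(p,x) = ∇_{p₁}S(0,p,x)` solve the Lie system
of the Poisson structure `α^{kl}(x) = 2 ∂²S/∂p₁^k ∂p₂^l (0,0,x)` on a
sufficiently small open neighborhood of `{0}×U`:
`s(0,x) = t(0,x) = x`, `{s^i,s^j}_ω = α^{ij}∘s`, `{t^i,t^j}_ω = −α^{ij}∘t`,
`{s^i,t^j}_ω = 0`. -/
theorem generating_function_solves_Lie_system
    (d : ℕ) (hd : 1 ≤ d)
    (U : Set (Fin d → ℝ)) (hU : IsOpen U)
    (Ω : Set ((Fin d → ℝ) × (Fin d → ℝ) × (Fin d → ℝ))) (hΩ : IsOpen Ω)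
    (hUΩ : ∀ x ∈ U, ((0 : Fin d → ℝ), (0 : Fin d → ℝ), x) ∈ Ω)
    (S : (Fin d → ℝ) × (Fin d → ℝ) × (Fin d → ℝ) → ℝ)
    (hS : ContDiffOn ℝ (⊤ : ℕ∞) S Ω)
    (hSGS : SGS d Ω S) (hSGA : SGA d U Ω S) :
    ∃ N : Set ((Fin d → ℝ) × (Fin d → ℝ)), IsOpen N ∧
      (∀ x ∈ U, ((0 : Fin d → ℝ), x) ∈ N) ∧
      (∀ x ∈ U, sourceS d S (0, x) = x ∧ targetS d S (0, x) = x) ∧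
      (∀ z ∈ N, ∀ i j : Fin d,
        pbω d (fun w => sourceS d S w i) (fun w => sourceS d S w j) z
            = alphaS d S (sourceS d S z) i j ∧
        pbω d (fun w => targetS d S w i) (fun w => targetS d S w j) z
            = - alphaS d S (targetS d S z) i j ∧
        pbω d (fun w => sourceS d S w i) (fun w => targetS d S w j) z = 0) := by
  obtain ⟨W, hW, hUW, hB, hC⟩ := groupoid_identities hΩ hS hSGS hSGA
  refine ⟨{z | (z.1, 0, 0, z.2) ∈ W ∧ (0, 0, z.1, z.2) ∈ W ∧ (0, z.1, 0, z.2) ∈ W}, ?_,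
    fun x hx => ⟨hUW x hx, hUW x hx, hUW x hx⟩, fun x hx => ⟨?_, ?_⟩, ?_⟩
  · exact (hW.preimage (by fun_prop)).inter
      ((hW.preimage (by fun_prop)).inter (hW.preimage (by fun_prop)))
  · ext k; exact DS_left_zero_snd hΩ hS hSGS (hUΩ x hx) k
  · ext k; exact DS_right_zero_fst hΩ hS hSGS (hUΩ x hx) k
  rintro ⟨p, x⟩ ⟨h1, h3, h2⟩ i j
  dsimp only at h1 h2 h3
  obtain ⟨mS, -, mS', -⟩ := hB _ _ _ h1
  obtain ⟨mT, mT', -⟩ := hB _ _ _ h3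
  change (0, 0, sourceS d S (p, x)) ∈ Ω at mS'
  change (0, 0, targetS d S (p, x)) ∈ Ω at mT'
  have ev : ∀ {c : ℝ → (Fin d → ℝ) × (Fin d → ℝ) × (Fin d → ℝ) × (Fin d → ℝ)},
      Continuous c → c 0 ∈ W → ∀ᶠ r in nhds (0 : ℝ), c r ∈ W := fun hc h0 =>
    hc.continuousAt.eventually (hW.mem_nhds h0)
  have bs := fun i l => half_bracket_source hΩ hS hSGS mS mS' i l
    ((ev (c := fun r => (p, 0, 0 + r • e d l, x)) (by fun_prop) (by simpa using h1)).mono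
      fun r hr => (hB _ _ _ hr).2.2.2)
  have bt := fun i l => half_bracket_target hΩ hS hSGS mT mT' i l
    ((ev (c := fun r => (0 + r • e d l, 0, p, x)) (by fun_prop) (by simpa using h3)).mono
      fun r hr => (hB _ _ _ hr).2.2.2)
  refine ⟨?_, ?_, bracket_mixed hΩ hS hSGS mT mS i j
    ((ev (c := fun r => (0 + r • e d j, p, 0, x)) (by fun_prop) (by simpa using h2)).mono
      fun r hr => (hC _ _ _ hr).2.2.2)⟩
  · rw [pbω, Finset.sum_sub_distrib, bs i j, alphaS_eq hΩ hS mS']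
    rw [Finset.sum_congr rfl fun u _ => mul_comm
      (fderiv ℝ (fun w => sourceS d S w i) (p, x) (e d u, 0)) _, bs j i,
      hess_symm hΩ hS mS (0, e d j, 0), hess_antisymm hΩ hS hSGS mS' j i]
    ring
  · rw [pbω, Finset.sum_sub_distrib, bt i j, alphaS_eq hΩ hS mT']
    rw [Finset.sum_congr rfl fun u _ => mul_comm
      (fderiv ℝ (fun w => targetS d S w i) (p, x) (e d u, 0)) _, bt j i,
      hess_symm hΩ hS mT (e d j, 0, 0) (e d i, 0, 0), hess_antisymm hΩ hS hSGS mT' j i]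
    ring
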